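/- arXiv:2005.07851 — 3 statements merged into one kernel-verified Lean document; each statement's English description precedes it below -/
import Mathlib

section
/- Let a < b, β > 0, Δt > 0. Let h*, h̃ : [a,b] → ℝ be continuously differentiable with h̃(a) = h̃(b) = 0 and h*(a) = h*(b) = 0, and suppose that for every Lipschitz function v : [a,b] → ℝ with v(a) = v(b) = 0 the weak-form identity ∫_a^b [ (β/Δt)·(h̃(x) − h*(x))·v(x)/√(1 + h̃′(x)²) + (h̃′(x) + h*′(x))·v′(x)/(√(1 + h̃′(x)²) + √(1 + h*′(x)²)) ] dx = 0 holds (v′ denoting the almost-everywhere derivative). Then (β/Δt)·∫_a^b (h̃ − h*)²/√(1 + (h̃′)²) dx + ∫_a^b ( √(1 + (h̃′)²) − √(1 + (h*′)²) ) dx = 0. -/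
/-!
Test the weak form with the increment `v = h̃ - h*`, which vanishes at the endpoints. The shape
of the flux makes its second term a difference of conjugates,
`(p² - q²) / (√(1 + p²) + √(1 + q²)) = √(1 + p²) - √(1 + q²)`, so it integrates to the change in
arc length. Only the increment has to be regular: `p ↦ √(1 + p²)` is 1-Lipschitz, so the change in
arc length density is integrable as soon as `v'` is, even if neither profile has finite length.
-/

open Set MeasureTheory

section SquareRoot

theorem sub_div_sqrt_add_sqrt {x y : ℝ} (hx : 0 ≤ x) (hy : 0 ≤ y) :
    (x - y) / (√x + √y) = √x - √y := by
  rcases (add_nonneg (Real.sqrt_nonneg x) (Real.sqrt_nonneg y)).eq_or_lt with hzero | hpos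
  · have hx0 : √x = 0 := by linarith [Real.sqrt_nonneg x, Real.sqrt_nonneg y]
    have hy0 : √y = 0 := by linarith
    simp only [hx0, hy0, add_zero, div_zero, sub_zero]
  · rw [div_eq_iff hpos.ne']
    linear_combination Real.sq_sqrt hy - Real.sq_sqrt hx

theorem add_mul_sub_div_sqrt_one_add_sq_add_sqrt_one_add_sq (p q : ℝ) :
    (p + q) * (p - q) / (√(1 + p ^ 2) + √(1 + q ^ 2)) = √(1 + p ^ 2) - √(1 + q ^ 2) := by
  rw [← sub_div_sqrt_add_sqrt (by positivity) (by positivity)]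
  ring

theorem abs_sqrt_sq_add_sq_sub_sqrt_sq_add_sq_le (a p q : ℝ) :
    |√(a ^ 2 + p ^ 2) - √(a ^ 2 + q ^ 2)| ≤ |p - q| := by
  calc |√(a ^ 2 + p ^ 2) - √(a ^ 2 + q ^ 2)|
      = |‖(a + p * Complex.I : ℂ)‖ - ‖(a + q * Complex.I : ℂ)‖| := by
        rw [Complex.norm_add_mul_I, Complex.norm_add_mul_I]
    _ ≤ ‖(a + p * Complex.I : ℂ) - (a + q * Complex.I)‖ := abs_norm_sub_norm_le _ _
    _ = ‖((p - q : ℝ) : ℂ) * Complex.I‖ := by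
        congr 1
        push_cast
        ring
    _ = |p - q| := by
        rw [norm_mul, Complex.norm_I, mul_one, Complex.norm_real, Real.norm_eq_abs]

end SquareRoot

section Differentiability

theorem ae_hasDerivAt_of_hasDerivWithinAt_of_convex {F : Type*} [NormedAddCommGroup F]
    [NormedSpace ℝ F] {f f' : ℝ → F} {s : Set ℝ} (hs : Convex ℝ s)
    (hf : ∀ x ∈ s, HasDerivWithinAt f (f' x) s x) :
    ∀ᵐ x, x ∈ s → HasDerivAt f (f' x) x := by
  have hfrontier : ∀ᵐ x, x ∉ frontier s :=
    measure_eq_zero_iff_ae_notMem.mp (hs.addHaar_frontier volume)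
  filter_upwards [hfrontier] with x hx hxs
  have hint : x ∈ interior s := by
    by_contra hnot
    exact hx ⟨subset_closure hxs, hnot⟩
  exact (hf x hxs).hasDerivAt (mem_interior_iff_mem_nhds.mp hint)

theorem exists_lipschitzOnWith_of_hasDerivWithinAt_of_continuousOn {F : Type*}
    [NormedAddCommGroup F] [NormedSpace ℝ F] {f f' : ℝ → F} {s : Set ℝ} (hs : IsCompact s)
    (hconv : Convex ℝ s) (hf : ∀ x ∈ s, HasDerivWithinAt f (f' x) s x)
    (hf' : ContinuousOn f' s) : ∃ K, LipschitzOnWith K f s := by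
  obtain ⟨C, hC⟩ := hs.exists_bound_of_continuousOn hf'
  refine ⟨C.toNNReal, hconv.lipschitzOnWith_of_nnnorm_hasDerivWithin_le hf fun x hx => ?_⟩
  exact NNReal.coe_le_coe.mp ((hC x hx).trans (Real.le_coe_toNNReal C))

theorem aestronglyMeasurable_of_ae_hasDerivAt {F : Type*} [NormedAddCommGroup F]
    [NormedSpace ℝ F] [CompleteSpace F] {μ : Measure ℝ} {f f' : ℝ → F}
    (hf : ∀ᵐ x ∂μ, HasDerivAt f (f' x) x) : AEStronglyMeasurable f' μ :=
  (aestronglyMeasurable_deriv f μ).congr (hf.mono fun _ hx => hx.deriv)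

end Differentiability

/-- The weak form of the semi-implicit step
`c (h - g) / √(1 + h'²) = d/dx [(h' + g') / (√(1 + h'²) + √(1 + g'²))]` on the interval from `a`
to `b`, tested with `v`. Here `g` is the previous profile, `h` the new one, and `c` stands for
`β / Δt`; the slopes `g'` and `h'` are passed as functions of their own, so that they need to be
derivatives of the profiles only almost everywhere. -/
noncomputable def semiImplicitWeakForm (a b c : ℝ) (g h g' h' v : ℝ → ℝ) : ℝ :=
  ∫ x in a..b, (c * ((h x - g x) * v x) / √(1 + h' x ^ 2) +
    (h' x + g' x) * deriv v x / (√(1 + h' x ^ 2) + √(1 + g' x ^ 2)))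

section EnergyIdentity

variable {a b : ℝ} {g h g' h' : ℝ → ℝ}

theorem intervalIntegrable_div_sqrt_one_add_sq {u p : ℝ → ℝ} (hu : ContinuousOn u (uIcc a b))
    (hp : AEStronglyMeasurable p (volume.restrict (uIoc a b))) :
    IntervalIntegrable (fun x => u x / √(1 + p x ^ 2)) volume a b := by
  have hsqrt : Continuous fun t : ℝ => √(1 + t ^ 2) := by fun_prop
  have hmeas : AEStronglyMeasurable (fun x => u x / √(1 + p x ^ 2))
      (volume.restrict (uIoc a b)) :=
    hu.intervalIntegrable.aestronglyMeasurable_restrict_uIoc.div₀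
      (hsqrt.comp_aestronglyMeasurable hp)
  refine hu.intervalIntegrable.mono_fun hmeas (ae_of_all _ fun x => ?_)
  have hone : 1 ≤ √(1 + p x ^ 2) := Real.one_le_sqrt.mpr (le_add_of_nonneg_right (sq_nonneg _))
  calc ‖u x / √(1 + p x ^ 2)‖ = ‖u x‖ / √(1 + p x ^ 2) := by
        rw [norm_div, Real.norm_of_nonneg (Real.sqrt_nonneg _)]
    _ ≤ ‖u x‖ := div_le_self (norm_nonneg _) hone

theorem intervalIntegrable_sqrt_one_add_sq_sub_sqrt_one_add_sq {p q : ℝ → ℝ}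
    (hp : AEStronglyMeasurable p (volume.restrict (uIoc a b)))
    (hq : AEStronglyMeasurable q (volume.restrict (uIoc a b)))
    (hpq : IntervalIntegrable (fun x => p x - q x) volume a b) :
    IntervalIntegrable (fun x => √(1 + p x ^ 2) - √(1 + q x ^ 2)) volume a b := by
  have hsqrt : Continuous fun t : ℝ => √(1 + t ^ 2) := by fun_prop
  refine hpq.mono_fun ((hsqrt.comp_aestronglyMeasurable hp).sub
    (hsqrt.comp_aestronglyMeasurable hq)) (ae_of_all _ fun x => ?_)
  simpa only [one_pow, Real.norm_eq_abs] using
    abs_sqrt_sq_add_sq_sub_sqrt_sq_add_sq_le 1 (p x) (q x)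

theorem semiImplicitWeakForm_sub (c : ℝ)
    (hg : ∀ᵐ x, x ∈ uIcc a b → HasDerivAt g (g' x) x)
    (hh : ∀ᵐ x, x ∈ uIcc a b → HasDerivAt h (h' x) x)
    (hgh : AbsolutelyContinuousOnInterval (fun x => h x - g x) a b) :
    semiImplicitWeakForm a b c g h g' h' (fun x => h x - g x) =
      c * (∫ x in a..b, (h x - g x) ^ 2 / √(1 + h' x ^ 2)) +
        ∫ x in a..b, (√(1 + h' x ^ 2) - √(1 + g' x ^ 2)) := by
  have hg_ae : ∀ᵐ x ∂volume.restrict (uIoc a b), HasDerivAt g (g' x) x :=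
    (ae_restrict_iff' measurableSet_uIoc).mpr (hg.mono fun _ hx hxI => hx (uIoc_subset_uIcc hxI))
  have hh_ae : ∀ᵐ x ∂volume.restrict (uIoc a b), HasDerivAt h (h' x) x :=
    (ae_restrict_iff' measurableSet_uIoc).mpr (hh.mono fun _ hx hxI => hx (uIoc_subset_uIcc hxI))
  have hderiv : deriv (fun x => h x - g x) =ᵐ[volume.restrict (uIoc a b)]
      fun x => h' x - g' x := by
    filter_upwards [hg_ae, hh_ae] with x hgx hhx using (hhx.sub hgx).deriv
  have hg'_meas := aestronglyMeasurable_of_ae_hasDerivAt hg_ae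
  have hh'_meas := aestronglyMeasurable_of_ae_hasDerivAt hh_ae
  have hsq_int : IntervalIntegrable (fun x => (h x - g x) ^ 2 / √(1 + h' x ^ 2)) volume a b :=
    intervalIntegrable_div_sqrt_one_add_sq (hgh.continuousOn.pow 2) hh'_meas
  have hlength_int : IntervalIntegrable (fun x => √(1 + h' x ^ 2) - √(1 + g' x ^ 2)) volume a b :=
    intervalIntegrable_sqrt_one_add_sq_sub_sqrt_one_add_sq hh'_meas hg'_meas
      (hgh.intervalIntegrable_deriv.congr_ae hderiv)
  rw [semiImplicitWeakForm, ← intervalIntegral.integral_const_mul,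
    ← intervalIntegral.integral_add (hsq_int.const_mul c) hlength_int]
  refine intervalIntegral.integral_congr_ae_restrict ?_
  filter_upwards [hderiv] with x hx
  rw [hx, add_mul_sub_div_sqrt_one_add_sq_add_sqrt_one_add_sq, ← sq, mul_div_assoc]

theorem semi_implicit_energy_identity_general (c : ℝ) {K : NNReal}
    (hg : ∀ᵐ x, x ∈ uIcc a b → HasDerivAt g (g' x) x)
    (hh : ∀ᵐ x, x ∈ uIcc a b → HasDerivAt h (h' x) x)
    (hlip : LipschitzOnWith K (fun x => h x - g x) (uIcc a b))
    (ha : h a = g a) (hb : h b = g b)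
    (hweak : ∀ (v : ℝ → ℝ) (L : NNReal), LipschitzOnWith L v (uIcc a b) → v a = 0 → v b = 0 →
      semiImplicitWeakForm a b c g h g' h' v = 0) :
    c * (∫ x in a..b, (h x - g x) ^ 2 / √(1 + h' x ^ 2)) +
      (∫ x in a..b, (√(1 + h' x ^ 2) - √(1 + g' x ^ 2))) = 0 := by
  rw [← semiImplicitWeakForm_sub c hg hh hlip.absolutelyContinuousOnInterval]
  exact hweak _ K hlip (sub_eq_zero.mpr ha) (sub_eq_zero.mpr hb)

end EnergyIdentity

/-- One-step energy identity for the semi-implicit capillary-surface update: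
testing the weak form with `v = h̃ - h*` yields the energy identity. -/
theorem semi_implicit_energy_identity (a b β Δt : ℝ) (hab : a < b) (hβ : 0 < β)
    (hΔt : 0 < Δt) (hstar htil hstar' htil' : ℝ → ℝ)
    (hds : ∀ x ∈ Set.Icc a b, HasDerivWithinAt hstar (hstar' x) (Set.Icc a b) x)
    (hcs : ContinuousOn hstar' (Set.Icc a b))
    (hdt : ∀ x ∈ Set.Icc a b, HasDerivWithinAt htil (htil' x) (Set.Icc a b) x)
    (hct : ContinuousOn htil' (Set.Icc a b))
    (hsa : hstar a = 0) (hsb : hstar b = 0) (hta : htil a = 0) (htb : htil b = 0)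
    (hweak : ∀ (v : ℝ → ℝ) (K : NNReal), LipschitzOnWith K v (Set.Icc a b) →
      v a = 0 → v b = 0 →
      (∫ x in a..b,
        (β / Δt * ((htil x - hstar x) * v x) / Real.sqrt (1 + htil' x ^ 2) +
          (htil' x + hstar' x) * deriv v x /
            (Real.sqrt (1 + htil' x ^ 2) + Real.sqrt (1 + hstar' x ^ 2)))) = 0) :
    β / Δt * (∫ x in a..b, (htil x - hstar x) ^ 2 / Real.sqrt (1 + htil' x ^ 2)) +
      (∫ x in a..b, (Real.sqrt (1 + htil' x ^ 2) - Real.sqrt (1 + hstar' x ^ 2))) = 0 := by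
  rw [← uIcc_of_le hab.le] at hds hcs hdt hct hweak
  obtain ⟨K, hlip⟩ := exists_lipschitzOnWith_of_hasDerivWithinAt_of_continuousOn isCompact_uIcc
    (convex_uIcc a b) (fun x hx => (hdt x hx).sub (hds x hx)) (hct.sub hcs)
  exact semi_implicit_energy_identity_general (β / Δt)
    (ae_hasDerivAt_of_hasDerivWithinAt_of_convex (convex_uIcc a b) hds)
    (ae_hasDerivAt_of_hasDerivWithinAt_of_convex (convex_uIcc a b) hdt)
    hlip (hta.trans hsa.symm) (htb.trans hsb.symm) hweak
end

section
/- Let T > 0, N a positive integer, Δt = T/N, β > 0, and σ ∈ ℝ with |σ| ≤ 1. Suppose given real sequences (aⁿ), (bⁿ) with aⁿ < bⁿ for 0 ≤ n ≤ N, arbitrary real slopes (pₙ), (qₙ), and functions h⁰ : [a⁰,b⁰] → ℝ Lipschitz with h⁰(a⁰) = h⁰(b⁰) = 0 and, for n = 0, …, N−1, continuously differentiable functions h̃ⁿ⁺¹ : [aⁿ⁺¹, bⁿ⁺¹] → ℝ with zero boundary values, such that for each n: (1) aⁿ⁺¹ = aⁿ + Δt·(σ + 1/√(1 + pₙ²))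 and bⁿ⁺¹ = bⁿ − Δt·(σ + 1/√(1 + qₙ²)); (2) hⁿ*(x) = hⁿ( aⁿ + (bⁿ − aⁿ)·(x − aⁿ⁺¹)/(bⁿ⁺¹ − aⁿ⁺¹) ) on [aⁿ⁺¹, bⁿ⁺¹]; (3) for every Lipschitz v on [aⁿ⁺¹, bⁿ⁺¹] with zero boundary values, ∫ [ (β/Δt)·(h̃ⁿ⁺¹ − hⁿ*)·v/√(1 + (h̃ⁿ⁺¹′)²) + (h̃ⁿ⁺¹′ + hⁿ*′)·v′/(√(1 + (h̃ⁿ⁺¹′)²) + √(1 + (hⁿ*′)²)) ] dx = 0; (4) hⁿ⁺¹ = max{h̃ⁿ⁺¹, 0}. Then max_{1 ≤ n ≤ N} ∫_{aⁿ}^{bⁿ} √(1 + ((hⁿ)′)²) dx + (β/Δt)·Σ_{n=0}^{N−1} ∫_{aⁿ⁺¹}^{bⁿ⁺¹} (h̃ⁿ⁺¹ − hⁿ*)²/√(1 + (h̃ⁿ⁺¹′)²) dx ≤ 8·T + 2·∫_{a⁰}^{b⁰} √(1 + ((h⁰)′)²) dx, where derivatives of the Lipschitz functions hⁿ are almost-everywhere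 derivatives. -/
/-! One step of the scheme never raises the energy by more than the growth of the wetted interval.
Testing the weak form with `v = u - w` turns the slope term into `√(1 + u'²) - √(1 + w'²)`, because
`(y + z) (y - z) = (1 + y²) - (1 + z²)`; the update therefore trades energy for dissipation exactly.
The projection is `1`-Lipschitz and so does not steepen the profile, and the affine rescaling
lengthens the graph by at most the increase of the width of its base. Telescoping bounds both
the energy at any time and the total dissipation by the initial energy plus the accumulated
growth, and adding the two bounds gives the factor `2`. -/

open MeasureTheory Set
open scoped NNReal

theorem add_sum_range_le_add_sum_range {R : Type*} [AddCommMonoid R] [PartialOrder R]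
    [IsOrderedAddMonoid R] {E D M : ℕ → R} {N : ℕ} (hstep : ∀ n < N, E (n + 1) + D n ≤ E n + M n) :
    E N + ∑ k ∈ Finset.range N, D k ≤ E 0 + ∑ k ∈ Finset.range N, M k := by
  induction N with
  | zero => simp
  | succ N ih =>
    calc E (N + 1) + ∑ k ∈ Finset.range (N + 1), D k
        = E (N + 1) + D N + ∑ k ∈ Finset.range N, D k := by
          rw [Finset.sum_range_succ]; abel
      _ ≤ E N + M N + ∑ k ∈ Finset.range N, D k := by
          exact add_le_add (hstep N N.lt_succ_self) le_rfl
      _ = E N + ∑ k ∈ Finset.range N, D k + M N := by abel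
      _ ≤ E 0 + ∑ k ∈ Finset.range N, M k + M N := by
          exact add_le_add (ih fun n hn => hstep n (hn.trans N.lt_succ_self)) le_rfl
      _ = E 0 + ∑ k ∈ Finset.range (N + 1), M k := by rw [Finset.sum_range_succ, add_assoc]

theorem add_sum_range_le_two_nsmul {R : Type*} [AddCommMonoid R] [PartialOrder R]
    [IsOrderedAddMonoid R] {E D M : ℕ → R} {n N : ℕ} (hE : 0 ≤ E N) (hD : ∀ k < N, 0 ≤ D k)
    (hM : ∀ k < N, 0 ≤ M k) (hstep : ∀ k < N, E (k + 1) + D k ≤ E k + M k) (hn : n ≤ N) :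
    E n + ∑ k ∈ Finset.range N, D k ≤ 2 • (E 0 + ∑ k ∈ Finset.range N, M k) := by
  have energy_le : E n ≤ E 0 + ∑ k ∈ Finset.range N, M k := calc
    E n ≤ E n + ∑ k ∈ Finset.range n, D k :=
      le_add_of_nonneg_right <| Finset.sum_nonneg fun k hk =>
        hD k ((Finset.mem_range.1 hk).trans_le hn)
    _ ≤ E 0 + ∑ k ∈ Finset.range n, M k :=
      add_sum_range_le_add_sum_range fun k hk => hstep k (hk.trans_le hn)
    _ ≤ E 0 + ∑ k ∈ Finset.range N, M k := by
      gcongr 1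
      exact Finset.sum_le_sum_of_subset_of_nonneg (Finset.range_mono hn)
        fun k hk _ => hM k (Finset.mem_range.1 hk)
  have dissipation_le : ∑ k ∈ Finset.range N, D k ≤ E 0 + ∑ k ∈ Finset.range N, M k :=
    (le_add_of_nonneg_left hE).trans (add_sum_range_le_add_sum_range hstep)
  rw [two_nsmul]
  exact add_le_add energy_le dissipation_le

theorem add_mul_sub_div_sqrt_add_sqrt (y z : ℝ) :
    (y + z) * (y - z) / (√(1 + y ^ 2) + √(1 + z ^ 2)) = √(1 + y ^ 2) - √(1 + z ^ 2) := by
  have hy : √(1 + y ^ 2) ^ 2 = 1 + y ^ 2 := Real.sq_sqrt (by positivity)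
  have hz : √(1 + z ^ 2) ^ 2 = 1 + z ^ 2 := Real.sq_sqrt (by positivity)
  rw [div_eq_iff (by positivity)]
  linear_combination hz - hy

theorem sqrt_sq_add_sq_le_add_posPart {s : ℝ} (hs : 0 ≤ s) (t : ℝ) :
    √(s ^ 2 + t ^ 2) ≤ √(1 + t ^ 2) + (s - 1)⁺ := by
  have hs_le : s ≤ 1 + (s - 1)⁺ := by linarith [le_posPart (s - 1)]
  have hone : 1 ≤ √(1 + t ^ 2) := by rw [Real.one_le_sqrt]; linarith [sq_nonneg t]
  have hsq : √(1 + t ^ 2) ^ 2 = 1 + t ^ 2 := Real.sq_sqrt (by positivity)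
  have hpos : 0 ≤ (s - 1)⁺ := posPart_nonneg _
  rw [Real.sqrt_le_left (by positivity)]
  calc s ^ 2 + t ^ 2 ≤ (1 + (s - 1)⁺) ^ 2 + t ^ 2 := by gcongr
    _ ≤ (√(1 + t ^ 2) + (s - 1)⁺) ^ 2 := by nlinarith [mul_nonneg hpos (sub_nonneg.2 hone)]

theorem norm_deriv_comp_le_of_lipschitzWith {𝕜 F G : Type*} [NontriviallyNormedField 𝕜]
    [NormedAddCommGroup F] [NormedSpace 𝕜 F] [NormedAddCommGroup G] [NormedSpace 𝕜 G] {K : ℝ≥0}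
    {φ : F → G} (hφ : LipschitzWith K φ) {f : 𝕜 → F} {f' : F} {x : 𝕜} (hf : HasDerivAt f f' x) :
    ‖deriv (fun y => φ (f y)) x‖ ≤ K * ‖f'‖ := by
  by_cases hd : DifferentiableAt 𝕜 (fun y => φ (f y)) x
  · refine le_of_tendsto_of_tendsto' (hasDerivAt_iff_tendsto_slope.1 hd.hasDerivAt).norm
      ((hasDerivAt_iff_tendsto_slope.1 hf).norm.const_mul (K : ℝ)) fun y => ?_
    rw [slope_def_module, slope_def_module, norm_smul, norm_smul, mul_left_comm]
    gcongr
    exact hφ.norm_sub_le _ _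
  · rw [deriv_zero_of_not_differentiableAt hd, norm_zero]
    positivity

theorem exists_lipschitzOnWith_Icc_of_hasDerivWithinAt {E : Type*} [NormedAddCommGroup E]
    [NormedSpace ℝ E] {a b : ℝ} {f f' : ℝ → E}
    (hf : ∀ x ∈ Icc a b, HasDerivWithinAt f (f' x) (Icc a b) x) (hf' : ContinuousOn f' (Icc a b)) :
    ∃ K, LipschitzOnWith K f (Icc a b) := by
  obtain ⟨C, hC⟩ := isCompact_Icc.exists_bound_of_continuousOn hf'
  exact ⟨C.toNNReal, (convex_Icc a b).lipschitzOnWith_of_nnnorm_hasDerivWithin_le hf fun x hx =>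
    NNReal.coe_le_coe.1 <| (hC x hx).trans C.le_coe_toNNReal⟩

theorem ae_hasDerivAt_of_hasDerivWithinAt_Icc {E : Type*} [NormedAddCommGroup E]
    [NormedSpace ℝ E] {a b : ℝ} {f f' : ℝ → E}
    (hf : ∀ x ∈ Icc a b, HasDerivWithinAt f (f' x) (Icc a b) x) :
    ∀ᵐ x ∂volume.restrict (Ioo a b), HasDerivAt f (f' x) x :=
  ae_restrict_of_forall_mem measurableSet_Ioo fun x hx =>
    (hf x (Ioo_subset_Icc_self hx)).hasDerivAt (Icc_mem_nhds hx.1 hx.2)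

theorem ae_restrict_uIoc_iff_Ioo {μ : Measure ℝ} [NullSingletonClass μ] {a b : ℝ} (hab : a ≤ b)
    {P : ℝ → Prop} : (∀ᵐ x ∂μ.restrict (uIoc a b), P x) ↔ ∀ᵐ x ∂μ.restrict (Ioo a b), P x := by
  rw [uIoc_of_le hab, restrict_Ioo_eq_restrict_Ioc]

theorem ae_hasDerivAt_deriv_of_lipschitzOnWith_Icc {E : Type*} [NormedAddCommGroup E]
    [NormedSpace ℝ E] [FiniteDimensional ℝ E] {a b : ℝ} {f : ℝ → E} {K : ℝ≥0}
    (hf : LipschitzOnWith K f (Icc a b)) :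
    ∀ᵐ x ∂volume.restrict (Ioo a b), HasDerivAt f (deriv f x) x := by
  rw [ae_restrict_iff' measurableSet_Ioo]
  filter_upwards [hf.ae_differentiableWithinAt_of_mem] with x hx hmem
  exact ((hx (Ioo_subset_Icc_self hmem)).differentiableAt
    (Icc_mem_nhds hmem.1 hmem.2)).hasDerivAt

theorem intervalIntegrable_comp_of_ae_hasDerivAt {E F : Type*} [NormedAddCommGroup E]
    [NormedSpace ℝ E] [FiniteDimensional ℝ E] [NormedAddCommGroup F] {a b : ℝ} (hab : a ≤ b)
    {f f' : ℝ → E} {φ : E → F} {K : ℝ≥0} (hf : LipschitzOnWith K f (Icc a b))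
    (hf' : ∀ᵐ x ∂volume.restrict (Ioo a b), HasDerivAt f (f' x) x) (hφ : Continuous φ) :
    IntervalIntegrable (fun x => φ (f' x)) volume a b := by
  have := FiniteDimensional.proper ℝ E
  obtain ⟨C, hC⟩ := (isCompact_closedBall (0 : E) K).exists_bound_of_continuousOn hφ.continuousOn
  have hmeas : AEStronglyMeasurable (fun x => φ (f' x)) (volume.restrict (Ioo a b)) := by
    refine (hφ.comp_stronglyMeasurable (stronglyMeasurable_deriv f)).aestronglyMeasurable.congr ?_
    filter_upwards [hf'] with x hx
    rw [hx.deriv]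
  rw [intervalIntegrable_iff_integrableOn_Ioo_of_le hab]
  refine Integrable.of_bound hmeas C ?_
  filter_upwards [hf', ae_restrict_mem measurableSet_Ioo] with x hx hmem
  refine hC _ (mem_closedBall_zero_iff.2 ?_)
  rw [← hx.deriv]
  exact norm_deriv_le_of_lipschitzOn (Icc_mem_nhds hmem.1 hmem.2) hf

/-- The energy of a capillary surface, i.e. the length `∫ √(1 + s²)` of its graph over `[a, b]`.
The argument is the slope `s` rather than the profile, so that an almost-everywhere derivative
can be supplied. -/
noncomputable def surfaceEnergy (s : ℝ → ℝ) (a b : ℝ) : ℝ :=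
  ∫ x in a..b, √(1 + s x ^ 2)

/-- The dissipation `∫ (u - w)² / √(1 + s²)` of an update from `w` to `u`, where `s` is the slope
of `u`; the factor `β / Δt` of the scheme is not included. -/
noncomputable def dissipation (u w s : ℝ → ℝ) (c d : ℝ) : ℝ :=
  ∫ x in c..d, (u x - w x) ^ 2 / √(1 + s x ^ 2)

theorem surfaceEnergy_nonneg {a b : ℝ} (hab : a ≤ b) (s : ℝ → ℝ) : 0 ≤ surfaceEnergy s a b :=
  intervalIntegral.integral_nonneg hab fun _ _ => Real.sqrt_nonneg _

theorem dissipation_nonneg {c d : ℝ} (hcd : c ≤ d) (u w s : ℝ → ℝ) : 0 ≤ dissipation u w s c d :=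
  intervalIntegral.integral_nonneg hcd fun _ _ => by positivity

theorem intervalIntegrable_sqrt_add_sq_of_ae_hasDerivAt {a b : ℝ} (hab : a ≤ b) {f f' : ℝ → ℝ}
    {K : ℝ≥0} (hf : LipschitzOnWith K f (Icc a b))
    (hf' : ∀ᵐ x ∂volume.restrict (Ioo a b), HasDerivAt f (f' x) x) (r : ℝ) :
    IntervalIntegrable (fun x => √(r + f' x ^ 2)) volume a b :=
  intervalIntegrable_comp_of_ae_hasDerivAt hab hf hf' (φ := fun y => √(r + y ^ 2)) (by fun_prop)

theorem surfaceEnergy_deriv_comp_le {c d : ℝ} (hcd : c ≤ d) {φ u u' : ℝ → ℝ} {K : ℝ≥0}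
    (hφ : LipschitzWith 1 φ) (hu : LipschitzOnWith K u (Icc c d))
    (hu' : ∀ᵐ x ∂volume.restrict (Ioo c d), HasDerivAt u (u' x) x) :
    surfaceEnergy (deriv fun x => φ (u x)) c d ≤ surfaceEnergy u' c d := by
  have hφu : LipschitzOnWith (1 * K) (fun x => φ (u x)) (Icc c d) := hφ.comp_lipschitzOnWith hu
  refine intervalIntegral.integral_mono_ae_restrict hcd
    (intervalIntegrable_sqrt_add_sq_of_ae_hasDerivAt hcd hφu
      (ae_hasDerivAt_deriv_of_lipschitzOnWith_Icc hφu) 1)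
    (intervalIntegrable_sqrt_add_sq_of_ae_hasDerivAt hcd hu hu' 1) ?_
  rw [← restrict_Ioo_eq_restrict_Icc]
  filter_upwards [hu'] with x hx
  have hslope : |deriv (fun y => φ (u y)) x| ≤ |u' x| := by
    simpa using norm_deriv_comp_le_of_lipschitzWith hφ hx
  exact Real.sqrt_le_sqrt (by gcongr 1; exact sq_le_sq.2 hslope)

/-- The profile on `[c, d]` obtained from a profile `f` on `[a, b]` by linear rescaling of its
base. -/
noncomputable def affineRescale (a b c d : ℝ) (f : ℝ → ℝ) (x : ℝ) : ℝ :=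
  f (a + (b - a) * (x - c) / (d - c))

theorem affineRescale_left (a b c d : ℝ) (f : ℝ → ℝ) : affineRescale a b c d f c = f a := by
  simp [affineRescale]

theorem affineRescale_right {c d : ℝ} (hcd : c ≠ d) (a b : ℝ) (f : ℝ → ℝ) :
    affineRescale a b c d f d = f b := by
  rw [affineRescale, mul_div_assoc, div_self (sub_ne_zero.2 hcd.symm), mul_one, add_sub_cancel]

theorem affineRescale_eq_comp_mul_add (a b c d : ℝ) (f : ℝ → ℝ) :
    affineRescale a b c d f =
      fun x => f ((b - a) / (d - c) * x + (a - (b - a) / (d - c) * c)) := by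
  funext x
  rw [affineRescale]
  ring_nf

theorem deriv_affineRescale (a b c d : ℝ) (f : ℝ → ℝ) (x : ℝ) :
    deriv (affineRescale a b c d f) x =
      (b - a) / (d - c) * deriv f ((b - a) / (d - c) * x + (a - (b - a) / (d - c) * c)) := by
  rw [affineRescale_eq_comp_mul_add,
    deriv_comp_mul_left _ (fun y => f (y + (a - (b - a) / (d - c) * c))), deriv_comp_add_const,
    smul_eq_mul]

theorem exists_lipschitzOnWith_affineRescale {a b c d : ℝ} (hab : a ≤ b) (hcd : c ≤ d) {f : ℝ → ℝ}
    {K : ℝ≥0} (hf : LipschitzOnWith K f (Icc a b)) :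
    ∃ K', LipschitzOnWith K' (affineRescale a b c d f) (Icc c d) := by
  have hmaps : MapsTo (fun x => a + (b - a) * (x - c) / (d - c)) (Icc c d) (Icc a b) := by
    intro x hx
    have hnonneg : 0 ≤ (x - c) / (d - c) :=
      div_nonneg (sub_nonneg.2 hx.1) (sub_nonneg.2 hcd)
    have hle_one : (x - c) / (d - c) ≤ 1 :=
      div_le_one_of_le₀ (sub_le_sub_right hx.2 c) (sub_nonneg.2 hcd)
    simp only [mul_div_assoc]
    constructor <;> nlinarith
  obtain ⟨L, hL⟩ : ∃ L, LipschitzOnWith L (fun x => a + (b - a) * (x - c) / (d - c)) (Icc c d) :=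
    exists_lipschitzOnWith_Icc_of_hasDerivWithinAt (f' := fun _ => (b - a) * 1 / (d - c))
      (fun x _ => ((((hasDerivWithinAt_id x _).sub_const c).const_mul (b - a)).div_const
        (d - c)).const_add a) continuousOn_const
  exact ⟨K * L, hf.comp hL hmaps⟩

theorem surfaceEnergy_deriv_affineRescale {a b c d : ℝ} (hab : a < b) (hcd : c < d) (f : ℝ → ℝ) :
    surfaceEnergy (deriv (affineRescale a b c d f)) c d =
      ∫ y in a..b, √(((d - c) / (b - a)) ^ 2 + deriv f y ^ 2) := by
  have : 0 < b - a := sub_pos.2 hab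
  have : 0 < d - c := sub_pos.2 hcd
  set r := (b - a) / (d - c) with hr
  have hr_pos : 0 < r := by positivity
  have hleft : r * c + (a - r * c) = a := by ring
  have hright : r * d + (a - r * c) = b := by rw [hr]; field_simp; ring
  have hscale (y : ℝ) :
      r⁻¹ * √(1 + (r * deriv f y) ^ 2) = √(((d - c) / (b - a)) ^ 2 + deriv f y ^ 2) := by
    rw [← inv_div (b - a) (d - c), ← hr, ← Real.sqrt_sq (inv_pos.2 hr_pos).le,
      ← Real.sqrt_mul (sq_nonneg _), Real.sqrt_sq (inv_pos.2 hr_pos).le]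
    congr 1
    field_simp
  simp only [surfaceEnergy, deriv_affineRescale]
  rw [intervalIntegral.integral_comp_mul_add (fun y => √(1 + (r * deriv f y) ^ 2)) hr_pos.ne',
    hleft, hright, smul_eq_mul, ← intervalIntegral.integral_const_mul]
  simp only [hscale]

theorem surfaceEnergy_deriv_affineRescale_le {a b c d : ℝ} (hab : a < b) (hcd : c < d)
    {f : ℝ → ℝ} {K : ℝ≥0} (hf : LipschitzOnWith K f (Icc a b)) :
    surfaceEnergy (deriv (affineRescale a b c d f)) c d ≤
      surfaceEnergy (deriv f) a b + ((d - c) - (b - a))⁺ := by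
  have hba : 0 < b - a := sub_pos.2 hab
  have hratio : 0 ≤ (d - c) / (b - a) := div_nonneg (sub_pos.2 hcd).le hba.le
  have hint := intervalIntegrable_sqrt_add_sq_of_ae_hasDerivAt hab.le hf
    (ae_hasDerivAt_deriv_of_lipschitzOnWith_Icc hf)
  have hgrowth : ∫ _ in a..b, ((d - c) / (b - a) - 1)⁺ = ((d - c) - (b - a))⁺ := by
    rw [intervalIntegral.integral_const, smul_eq_mul, posPart_def, posPart_def,
      mul_max_of_nonneg _ _ hba.le, mul_sub, mul_div_cancel₀ _ hba.ne', mul_one, mul_zero]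
  rw [surfaceEnergy_deriv_affineRescale hab hcd, ← hgrowth, surfaceEnergy,
    ← intervalIntegral.integral_add (hint 1) intervalIntegrable_const]
  exact intervalIntegral.integral_mono_on hab.le (hint _)
    ((hint 1).add intervalIntegrable_const) fun y _ => sqrt_sq_add_sq_le_add_posPart hratio _

/-- The semi-implicit update on `[c, d]` of a profile `w` to a Lipschitz profile `u` with
almost-everywhere derivative `u'`: both agree at the end points and `u` solves the weak form of
the discrete mean curvature motion, in which `κ` stands for the `β / Δt` of the scheme. -/
structure IsCapillaryUpdate (κ c d : ℝ) (w u u' : ℝ → ℝ) : Prop where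
  lipschitz : ∃ K, LipschitzOnWith K u (Icc c d)
  ae_hasDerivAt : ∀ᵐ x ∂volume.restrict (Ioo c d), HasDerivAt u (u' x) x
  left_eq : u c = w c
  right_eq : u d = w d
  weak_form : ∀ (v : ℝ → ℝ) (K : ℝ≥0), LipschitzOnWith K v (Icc c d) → v c = 0 → v d = 0 →
    ∫ x in c..d, (κ * ((u x - w x) * v x) / √(1 + u' x ^ 2) +
      (u' x + deriv w x) * deriv v x / (√(1 + u' x ^ 2) + √(1 + deriv w x ^ 2))) = 0

namespace IsCapillaryUpdate

variable {κ c d : ℝ} {w u u' : ℝ → ℝ} {K : ℝ≥0}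

theorem intervalIntegrable_dissipation (hcd : c ≤ d) (hu : IsCapillaryUpdate κ c d w u u')
    (hw : ContinuousOn w (Icc c d)) :
    IntervalIntegrable (fun x => (u x - w x) ^ 2 / √(1 + u' x ^ 2)) volume c d := by
  obtain ⟨L, hL⟩ := hu.lipschitz
  have hcont : ContinuousOn (fun x => (u x - w x) ^ 2) (uIcc c d) := by
    rw [uIcc_of_le hcd]
    exact (hL.continuousOn.sub hw).pow 2
  exact (intervalIntegrable_comp_of_ae_hasDerivAt hcd hL hu.ae_hasDerivAt
    (φ := fun y => (√(1 + y ^ 2))⁻¹)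
    (Continuous.inv₀ (by fun_prop) fun y => by positivity)).continuousOn_mul hcont

theorem surfaceEnergy_add_dissipation (hcd : c ≤ d) (hu : IsCapillaryUpdate κ c d w u u')
    (hw : LipschitzOnWith K w (Icc c d)) :
    surfaceEnergy u' c d + κ * dissipation u w u' c d = surfaceEnergy (deriv w) c d := by
  obtain ⟨L, hL⟩ := hu.lipschitz
  have hw' := ae_hasDerivAt_deriv_of_lipschitzOnWith_Icc hw
  have hint_u := intervalIntegrable_sqrt_add_sq_of_ae_hasDerivAt hcd hL hu.ae_hasDerivAt 1
  have hint_w := intervalIntegrable_sqrt_add_sq_of_ae_hasDerivAt hcd hw hw' 1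
  have hint_diss := hu.intervalIntegrable_dissipation hcd hw.continuousOn
  have htest := hu.weak_form (fun x => u x - w x) (L + K) (hL.sub hw)
    (sub_eq_zero.2 hu.left_eq) (sub_eq_zero.2 hu.right_eq)
  have hbalance : ∫ x in c..d, (κ * ((u x - w x) ^ 2 / √(1 + u' x ^ 2)) +
      (√(1 + u' x ^ 2) - √(1 + deriv w x ^ 2))) = 0 := by
    rw [← htest]
    refine intervalIntegral.integral_congr_ae_restrict ((ae_restrict_uIoc_iff_Ioo hcd).2 ?_)
    filter_upwards [hu.ae_hasDerivAt, hw'] with x hux hwx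
    rw [(hux.fun_sub hwx).deriv, add_mul_sub_div_sqrt_add_sqrt]
    ring
  rw [intervalIntegral.integral_add (hint_diss.const_mul κ) (hint_u.sub hint_w),
    intervalIntegral.integral_sub hint_u hint_w, intervalIntegral.integral_const_mul] at hbalance
  rw [surfaceEnergy, surfaceEnergy, dissipation]
  linarith

theorem surfaceEnergy_deriv_comp_add_dissipation_le (hcd : c ≤ d)
    (hu : IsCapillaryUpdate κ c d w u u') (hw : LipschitzOnWith K w (Icc c d)) {φ : ℝ → ℝ}
    (hφ : LipschitzWith 1 φ) :
    surfaceEnergy (deriv fun x => φ (u x)) c d + κ * dissipation u w u' c d ≤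
      surfaceEnergy (deriv w) c d := by
  obtain ⟨L, hL⟩ := hu.lipschitz
  rw [← hu.surfaceEnergy_add_dissipation hcd hw]
  gcongr
  exact surfaceEnergy_deriv_comp_le hcd hφ hL hu.ae_hasDerivAt

end IsCapillaryUpdate

theorem unconditional_stability_general {N : ℕ} {a b κ : ℕ → ℝ} {h w u u' : ℕ → ℝ → ℝ}
    {φ : ℝ → ℝ} {K₀ : ℝ≥0} (hab : ∀ n ≤ N, a n < b n) (hκ : ∀ n < N, 0 ≤ κ n)
    (hφ : LipschitzWith 1 φ) (hh0 : LipschitzOnWith K₀ (h 0) (Icc (a 0) (b 0)))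
    (hw : ∀ n < N, ∀ x, w n x = affineRescale (a n) (b n) (a (n + 1)) (b (n + 1)) (h n) x)
    (hu : ∀ n < N, IsCapillaryUpdate (κ n) (a (n + 1)) (b (n + 1)) (w n) (u n) (u' n))
    (hproj : ∀ n < N, ∀ x, h (n + 1) x = φ (u n x)) {n : ℕ} (hn : n ≤ N) :
    surfaceEnergy (deriv (h n)) (a n) (b n) +
        ∑ k ∈ Finset.range N, κ k * dissipation (u k) (w k) (u' k) (a (k + 1)) (b (k + 1)) ≤
      2 * (surfaceEnergy (deriv (h 0)) (a 0) (b 0) +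
        ∑ k ∈ Finset.range N, ((b (k + 1) - a (k + 1)) - (b k - a k))⁺) := by
  have hlip : ∀ n ≤ N, ∃ K, LipschitzOnWith K (h n) (Icc (a n) (b n)) := by
    rintro (_ | n) hn
    · exact ⟨K₀, hh0⟩
    · obtain ⟨L, hL⟩ := (hu n hn).lipschitz
      rw [funext (hproj n hn)]
      exact ⟨1 * L, hφ.comp_lipschitzOnWith hL⟩
  have hstep : ∀ n < N, surfaceEnergy (deriv (h (n + 1))) (a (n + 1)) (b (n + 1)) +
      κ n * dissipation (u n) (w n) (u' n) (a (n + 1)) (b (n + 1)) ≤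
        surfaceEnergy (deriv (h n)) (a n) (b n) +
          ((b (n + 1) - a (n + 1)) - (b n - a n))⁺ := by
    intro n hn
    obtain ⟨K, hK⟩ := hlip n hn.le
    obtain ⟨L, hL⟩ := exists_lipschitzOnWith_affineRescale (hab n hn.le).le (hab (n + 1) hn).le hK
    rw [← funext (hw n hn)] at hL
    have hupdate := (hu n hn).surfaceEnergy_deriv_comp_add_dissipation_le (hab (n + 1) hn).le hL hφ
    rw [← funext (hproj n hn)] at hupdate
    refine hupdate.trans ?_
    rw [funext (hw n hn)]
    exact surfaceEnergy_deriv_affineRescale_le (hab n hn.le) (hab (n + 1) hn) hK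
  rw [two_mul, ← two_nsmul]
  exact add_sum_range_le_two_nsmul
    (E := fun n => surfaceEnergy (deriv (h n)) (a n) (b n))
    (surfaceEnergy_nonneg (hab N le_rfl).le _)
    (fun k hk => mul_nonneg (hκ k hk) (dissipation_nonneg (hab (k + 1) hk).le _ _ _))
    (fun k _ => posPart_nonneg _) hstep hn

theorem projection_eq_zero_of_update_eq_zero {N : ℕ} {a : ℕ → ℝ} {h u : ℕ → ℝ → ℝ}
    (h0 : h 0 (a 0) = 0) (hu : ∀ n < N, u n (a (n + 1)) = 0)
    (hproj : ∀ n < N, ∀ x, h (n + 1) x = max (u n x) 0) : ∀ n ≤ N, h n (a n) = 0 := by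
  rintro (_ | n) hn
  · exact h0
  · rw [hproj n hn, hu n hn, max_self]

theorem posPart_width_sub_width_le {τ σ s t a b a' b' : ℝ} (hτ : 0 ≤ τ) (hs : 0 ≤ s) (ht : 0 ≤ t)
    (ha : a' = a + τ * (σ + s)) (hb : b' = b - τ * (σ + t)) :
    ((b' - a') - (b - a))⁺ ≤ 2 * τ * |σ| := by
  refine max_le ?_ (by positivity)
  calc (b' - a') - (b - a) = 2 * τ * -σ - τ * (s + t) := by rw [ha, hb]; ring
    _ ≤ 2 * τ * -σ := sub_le_self _ (by positivity)
    _ ≤ 2 * τ * |σ| := by gcongr; exact neg_le_abs σ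

theorem sum_posPart_width_sub_width_le {N : ℕ} {τ σ : ℝ} {a b s t : ℕ → ℝ} (hτ : 0 ≤ τ)
    (hs : ∀ n < N, 0 ≤ s n) (ht : ∀ n < N, 0 ≤ t n)
    (ha : ∀ n < N, a (n + 1) = a n + τ * (σ + s n))
    (hb : ∀ n < N, b (n + 1) = b n - τ * (σ + t n)) :
    ∑ k ∈ Finset.range N, ((b (k + 1) - a (k + 1)) - (b k - a k))⁺ ≤ 2 * (N * τ) * |σ| := calc
  _ ≤ ∑ k ∈ Finset.range N, 2 * τ * |σ| := Finset.sum_le_sum fun k hk =>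
    have hk' := Finset.mem_range.1 hk
    posPart_width_sub_width_le hτ (hs k hk') (ht k hk') (ha k hk') (hb k hk')
  _ = 2 * (N * τ) * |σ| := by rw [Finset.sum_const, Finset.card_range, nsmul_eq_mul]; ring

/-- Unconditional stability of the projection scheme for droplet dynamics with
moving contact lines and an impermeable obstacle: the capillary surface energy
plus the accumulated dissipation is bounded by `8T + 2·(initial surface energy)`,
for arbitrary time step `Δt = T/N`.  Derivatives of the Lipschitz profiles `hⁿ`
are taken in the a.e. sense via `deriv`. -/
theorem unconditional_stability (T : ℝ) (hT : 0 < T) (N : ℕ) (hN : 0 < N)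
    (Δt β σ : ℝ) (hΔt : Δt = T / (N : ℝ)) (hβ : 0 < β) (hσ : |σ| ≤ 1)
    (a b p q : ℕ → ℝ) (hab : ∀ n ≤ N, a n < b n)
    (h : ℕ → ℝ → ℝ) (htil htil' : ℕ → ℝ → ℝ) (K₀ : NNReal)
    (hh0 : LipschitzOnWith K₀ (h 0) (Set.Icc (a 0) (b 0)))
    (hh0a : h 0 (a 0) = 0) (hh0b : h 0 (b 0) = 0)
    (hstar : ℕ → ℝ → ℝ)
    (hstardef : ∀ n, ∀ x, hstar n x =
      h n (a n + (b n - a n) * (x - a (n + 1)) / (b (n + 1) - a (n + 1))))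
    (ha : ∀ n < N, a (n + 1) = a n + Δt * (σ + 1 / Real.sqrt (1 + p n ^ 2)))
    (hb : ∀ n < N, b (n + 1) = b n - Δt * (σ + 1 / Real.sqrt (1 + q n ^ 2)))
    (hdt : ∀ n < N, ∀ x ∈ Set.Icc (a (n + 1)) (b (n + 1)),
      HasDerivWithinAt (htil n) (htil' n x) (Set.Icc (a (n + 1)) (b (n + 1))) x)
    (hct : ∀ n < N, ContinuousOn (htil' n) (Set.Icc (a (n + 1)) (b (n + 1))))
    (hta : ∀ n < N, htil n (a (n + 1)) = 0) (htb : ∀ n < N, htil n (b (n + 1)) = 0)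
    (hweak : ∀ n < N, ∀ (v : ℝ → ℝ) (K : NNReal),
      LipschitzOnWith K v (Set.Icc (a (n + 1)) (b (n + 1))) →
      v (a (n + 1)) = 0 → v (b (n + 1)) = 0 →
      (∫ x in (a (n + 1))..(b (n + 1)),
        (β / Δt * ((htil n x - hstar n x) * v x) / Real.sqrt (1 + htil' n x ^ 2) +
          (htil' n x + deriv (hstar n) x) * deriv v x /
            (Real.sqrt (1 + htil' n x ^ 2) +
              Real.sqrt (1 + deriv (hstar n) x ^ 2)))) = 0)
    (hproj : ∀ n < N, ∀ x, h (n + 1) x = max (htil n x) 0) :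
    ∀ n, 1 ≤ n → n ≤ N →
      (∫ x in (a n)..(b n), Real.sqrt (1 + deriv (h n) x ^ 2)) +
        β / Δt * (∑ k ∈ Finset.range N,
          ∫ x in (a (k + 1))..(b (k + 1)),
            (htil k x - hstar k x) ^ 2 / Real.sqrt (1 + htil' k x ^ 2)) ≤
      8 * T + 2 * ∫ x in (a 0)..(b 0), Real.sqrt (1 + deriv (h 0) x ^ 2) := by
  have hΔt_pos : 0 < Δt := by rw [hΔt]; positivity
  have hah := projection_eq_zero_of_update_eq_zero hh0a hta hproj
  have hbh := projection_eq_zero_of_update_eq_zero hh0b htb hproj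
  have hupdate : ∀ n < N, IsCapillaryUpdate (β / Δt) (a (n + 1)) (b (n + 1)) (hstar n) (htil n)
      (htil' n) := by
    intro n hn
    have hstar_eq : hstar n = affineRescale _ _ _ _ (h n) := funext (hstardef n)
    refine ⟨exists_lipschitzOnWith_Icc_of_hasDerivWithinAt (hdt n hn) (hct n hn),
      ae_hasDerivAt_of_hasDerivWithinAt_Icc (hdt n hn), ?_, ?_, hweak n hn⟩
    · rw [hta n hn, hstar_eq, affineRescale_left, hah n hn.le]
    · rw [htb n hn, hstar_eq, affineRescale_right (hab (n + 1) hn).ne, hbh n hn.le]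
  have hgrowth := sum_posPart_width_sub_width_le hΔt_pos.le (fun _ _ => by positivity)
    (fun _ _ => by positivity) ha hb
  rw [show N * Δt = T by rw [hΔt]; field_simp] at hgrowth
  have hT_mul_σ : T * |σ| ≤ T := mul_le_of_le_one_right hT.le hσ
  intro n _ hn
  have hstab := unconditional_stability_general hab (fun _ _ => by positivity)
    (LipschitzWith.id.max_const 0) hh0 (fun n _ => hstardef n) hupdate hproj hn
  rw [← Finset.mul_sum] at hstab
  simp only [surfaceEnergy, dissipation] at hstab
  linarith
end

section
/- Let (D, μ) be a measure space with 0 < μ(D) < ∞, let ũ : D → ℝ be integrable, and let V > 0 satisfy ∫_D ũ dμ = V. Then there exists a unique λ* ∈ ℝ such that ∫_D max{ũ(x) + λ*, 0} dμ(x) = V, and moreover λ* ≤ 0. -/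
open MeasureTheory

/-!
The volume `∫ (u + l)⁺ dμ` of the truncated profile varies continuously with `l` and vanishes as
`l → -∞`, so it takes every positive value below any value it takes. Where it is positive it is
strictly increasing, because the truncations for two different `l` agree only where both vanish;
hence each positive value is taken only once. The multiplier for `V = ∫ u` is nonpositive because
`∫ u ≤ ∫ u⁺`.
-/

section TruncatedVolume

open Filter Set Topology

variable {Ω : Type*} [MeasurableSpace Ω] {μ : Measure Ω} {u : Ω → ℝ} {a l m V : ℝ}

/-- The volume of the profile `u` raised by `l` and cut off at the obstacle `0`; in terms of the
paper's function, `f(λ) = truncatedVolume μ ũ λ - V`. It has the junk value `0` when the truncated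
profile is not integrable. -/
noncomputable def truncatedVolume (μ : Measure Ω) (u : Ω → ℝ) (l : ℝ) : ℝ :=
  ∫ x, max (u x + l) 0 ∂μ

theorem integrable_of_truncatedVolume_pos (h : 0 < truncatedVolume μ u l) :
    Integrable (fun x => max (u x + l) 0) μ :=
  Integrable.of_integral_ne_zero h.ne'

theorem norm_max_add_zero_le_of_le (hla : l ≤ a) (t : ℝ) :
    ‖max (t + l) 0‖ ≤ max (t + a) 0 := by
  rw [Real.norm_of_nonneg (le_max_right _ _)]
  gcongr

theorem max_add_zero_eq_zero_of_eq {t : ℝ} (hlm : l < m) (h : max (t + l) 0 = max (t + m) 0) :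
    max (t + l) 0 = 0 := by
  grind

theorem integrable_max_add_zero_of_le (ha : Integrable (fun x => max (u x + a) 0) μ)
    (hla : l ≤ a) : Integrable (fun x => max (u x + l) 0) μ := by
  -- Measurability of the lower truncation comes from cutting off the upper one a second time.
  have truncate_again :
      (fun x => max (u x + l) 0) = fun x => max (max (u x + a) 0 + (l - a)) 0 := by
    grind
  refine ha.mono' ?_ (ae_of_all μ fun x => norm_max_add_zero_le_of_le hla (u x))
  rw [truncate_again]
  exact (ha.aestronglyMeasurable.add aestronglyMeasurable_const).sup aestronglyMeasurable_const

theorem truncatedVolume_lt_of_lt (hl : 0 < truncatedVolume μ u l)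
    (hm : Integrable (fun x => max (u x + m) 0) μ) (hlm : l < m) :
    truncatedVolume μ u l < truncatedVolume μ u m := by
  have hl_int := integrable_of_truncatedVolume_pos hl
  have pointwise_le (x : Ω) : max (u x + l) 0 ≤ max (u x + m) 0 := by gcongr
  refine (integral_mono hl_int hm pointwise_le).lt_of_ne fun heq => hl.ne' ?_
  have ae_eq := (integral_eq_iff_of_ae_le hl_int hm (ae_of_all μ pointwise_le)).1 heq
  refine integral_eq_zero_of_ae ?_
  filter_upwards [ae_eq] with x hx
  exact max_add_zero_eq_zero_of_eq hlm hx

theorem strictMonoOn_truncatedVolume (μ : Measure Ω) (u : Ω → ℝ) :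
    StrictMonoOn (truncatedVolume μ u) {l | 0 < truncatedVolume μ u l} :=
  fun _ hl _ hm => truncatedVolume_lt_of_lt hl (integrable_of_truncatedVolume_pos hm)

theorem continuousOn_truncatedVolume_Iic (ha : Integrable (fun x => max (u x + a) 0) μ) :
    ContinuousOn (truncatedVolume μ u) (Iic a) :=
  continuousOn_of_dominated
    (fun _ hl => (integrable_max_add_zero_of_le ha hl).aestronglyMeasurable)
    (fun _ hl => ae_of_all μ fun x => norm_max_add_zero_le_of_le hl (u x)) ha
    (ae_of_all μ fun _ => by fun_prop)

theorem tendsto_truncatedVolume_atBot (ha : Integrable (fun x => max (u x + a) 0) μ) :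
    Tendsto (truncatedVolume μ u) atBot (𝓝 0) := by
  have eventually_zero (x : Ω) : (fun l => max (u x + l) 0) =ᶠ[atBot] fun _ => 0 := by
    filter_upwards [eventually_le_atBot (-u x)] with l hl
    exact max_eq_right (by linarith)
  rw [← integral_zero Ω ℝ (μ := μ)]
  refine tendsto_integral_filter_of_dominated_convergence _ ?_ ?_ ha
    (ae_of_all μ fun x => tendsto_const_nhds.congr' (eventually_zero x).symm)
  · filter_upwards [eventually_le_atBot a] with l hl
    exact (integrable_max_add_zero_of_le ha hl).aestronglyMeasurable
  · filter_upwards [eventually_le_atBot a] with l hl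
    exact ae_of_all μ fun x => norm_max_add_zero_le_of_le hl (u x)

theorem exists_truncatedVolume_eq (hV : 0 < V) (hVa : V ≤ truncatedVolume μ u a) :
    ∃ l, truncatedVolume μ u l = V := by
  have ha := integrable_of_truncatedVolume_pos (hV.trans_le hVa)
  obtain ⟨l, -, hl⟩ := isPreconnected_Iic.intermediate_value_Ioc self_mem_Iic
    (le_principal_iff.2 (Iic_mem_atBot a)) (continuousOn_truncatedVolume_Iic ha)
    (tendsto_truncatedVolume_atBot ha) ⟨hV, hVa⟩
  exact ⟨l, hl⟩

theorem lagrange_multiplier_exists_unique_general (hV : 0 < V)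
    (hVa : V ≤ truncatedVolume μ u a) :
    (∃! l, truncatedVolume μ u l = V) ∧ ∀ l, truncatedVolume μ u l = V → l ≤ a := by
  have pos_of_eq {l : ℝ} (hl : truncatedVolume μ u l = V) : 0 < truncatedVolume μ u l :=
    hV.trans_eq hl.symm
  have strictMono := strictMonoOn_truncatedVolume μ u
  obtain ⟨l, hl⟩ := exists_truncatedVolume_eq hV hVa
  refine ⟨⟨l, hl, fun m hm => ?_⟩, fun m hm => ?_⟩
  · exact strictMono.injOn (pos_of_eq hm) (pos_of_eq hl) (hm.trans hl.symm)
  · exact (strictMono.le_iff_le (pos_of_eq hm) (hV.trans_le hVa)).1 (hm.trans_le hVa)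

end TruncatedVolume

/-- Existence and uniqueness of the Lagrange multiplier in the projection lemma:
there is a unique `λ*` with `∫ max(ũ + λ*, 0) dμ = V`, and any such `λ*` is
nonpositive. -/
theorem lagrange_multiplier_exists_unique {Ω : Type*} [MeasurableSpace Ω]
    (μ : Measure Ω) (hpos : 0 < μ Set.univ) (hfin : μ Set.univ < ⊤)
    (u : Ω → ℝ) (hu : Integrable u μ) (V : ℝ) (hV : 0 < V)
    (hvol : ∫ x, u x ∂μ = V) :
    (∃! l : ℝ, ∫ x, max (u x + l) 0 ∂μ = V) ∧
      ∀ l : ℝ, (∫ x, max (u x + l) 0 ∂μ = V) → l ≤ 0 := by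
  refine lagrange_multiplier_exists_unique_general hV ?_
  simpa [truncatedVolume, hvol] using integral_mono hu hu.pos_part fun x => le_max_left (u x) 0
end
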